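/- arXiv:2007.15725 — 3 statements merged into one kernel-verified Lean document; each statement's English description precedes it below -/
import Mathlib

section
/- Let p ∈ I and S' ⊊ J with |S'∪S_{p−1}| ≤ n − l < |S'∪S_p|, and assume p < m or |S_m| < n − l. If S' ∩ S_p = ∅, |S'| ≤ n − l − 1, and S_{p+1}∖S_p is not a subset of S' whenever p ≤ m − 1, then the mixing inequality Mix≥(S',p) defines a facet of conv(X^{l,u}). -/
open Finset

noncomputable section

def Xset (n m l u : ℕ) (S : Fin m → Finset (Fin n)) : Set ((Fin n → ℝ) × (Fin m → ℝ)) :=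
  {zd | (∀ j, zd.1 j = 0 ∨ zd.1 j = 1) ∧ (∀ i, zd.2 i = 0 ∨ zd.2 i = 1) ∧
        (∀ i, zd.2 i = ∏ j ∈ S i, (1 - zd.1 j)) ∧
        (l : ℝ) ≤ ∑ j, zd.1 j ∧ ∑ j, zd.1 j ≤ (u : ℝ)}

def Dset (n m l u : ℕ) (S : Fin m → Finset (Fin n)) : Set (Fin m → ℝ) :=
  Prod.snd '' Xset n m l u S

def Xfiber (n m l u : ℕ) (S : Fin m → Finset (Fin n)) (δ : Fin m → ℝ) :
    Set (Fin n → ℝ) :=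
  {z | (z, δ) ∈ Xset n m l u S}

/-- The family is closed under nonempty intersection. -/
def ClosedInter (n m : ℕ) (S : Fin m → Finset (Fin n)) : Prop :=
  ∀ i j : Fin m, (S i ∩ S j).Nonempty → ∃ k, S i ∩ S j = S k

/-- The family is proper. -/
def ProperFam (n m l u : ℕ) (S : Fin m → Finset (Fin n)) : Prop :=
  ClosedInter n m S ∧
  ∃ D : Finset (Fin m → ℝ), (D : Set (Fin m → ℝ)) = Dset n m l u S ∧ D.card = m + 1 ∧
    AffineIndependent ℝ (Subtype.val : {x : Fin m → ℝ // x ∈ D} → (Fin m → ℝ))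

/-- `f x ≤ c` is valid and defines a facet of `conv P`. -/
def IsFacet {E : Type*} [AddCommGroup E] [Module ℝ E] (P : Set E) (f : E → ℝ) (c : ℝ) :
    Prop :=
  (∀ x ∈ P, f x ≤ c) ∧
  Module.finrank ℝ (affineSpan ℝ {x ∈ convexHull ℝ P | f x = c}).direction + 1 =
    Module.finrank ℝ (affineSpan ℝ P).direction

def SS (n m : ℕ) (S : Fin m → Finset (Fin n)) : ℕ → Finset (Fin n) :=
  fun k => if h : 1 ≤ k ∧ k ≤ m then S ⟨k - 1, by omega⟩ else if k = 0 then ∅ else Finset.univ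

def dd (m : ℕ) (δ : Fin m → ℝ) : ℕ → ℝ :=
  fun k => if h : 1 ≤ k ∧ k ≤ m then δ ⟨k - 1, by omega⟩ else if k = 0 then 1 else 0

def mixLeLHS (n m u : ℕ) (S : Fin m → Finset (Fin n)) (p : ℕ) (S' : Finset (Fin n))
    (zd : (Fin n → ℝ) × (Fin m → ℝ)) : ℝ :=
  ∑ j ∈ S', zd.1 j + ((u : ℝ) - ((S' \ SS n m S p).card : ℝ)) * dd m zd.2 p
    + ∑ i ∈ Finset.Icc (p + 1) m,
        (((S' \ SS n m S (i - 1)).card : ℝ) - ((S' \ SS n m S i).card : ℝ)) * dd m zd.2 i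

def MixLe (n m u : ℕ) (S : Fin m → Finset (Fin n)) (p : ℕ) (S' : Finset (Fin n))
    (zd : (Fin n → ℝ) × (Fin m → ℝ)) : Prop :=
  mixLeLHS n m u S p S' zd ≤ (u : ℝ)

def mixGeLHS (n m l : ℕ) (S : Fin m → Finset (Fin n)) (p : ℕ) (S' : Finset (Fin n))
    (zd : (Fin n → ℝ) × (Fin m → ℝ)) : ℝ :=
  (((S' ∪ SS n m S p).card : ℝ) - (n : ℝ) + (l : ℝ)) * dd m zd.2 p
    + ∑ i ∈ Finset.Icc (p + 1) m,
        (((S' ∪ SS n m S i).card : ℝ) - ((S' ∪ SS n m S (i - 1)).card : ℝ)) * dd m zd.2 i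
    - ∑ j ∈ S', zd.1 j

def MixGe (n m l : ℕ) (S : Fin m → Finset (Fin n)) (p : ℕ) (S' : Finset (Fin n))
    (zd : (Fin n → ℝ) × (Fin m → ℝ)) : Prop :=
  mixGeLHS n m l S p S' zd ≤ 0

def NestedLin (n m l u : ℕ) (S : Fin m → Finset (Fin n))
    (zd : (Fin n → ℝ) × (Fin m → ℝ)) : Prop :=
  ((l : ℝ) ≤ ∑ j, zd.1 j) ∧ (∑ j, zd.1 j ≤ (u : ℝ)) ∧
  (∀ i : Fin m, ∀ j ∈ S i, zd.1 j + zd.2 i ≤ 1) ∧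
  (1 ≤ dd m zd.2 1 + ∑ j ∈ SS n m S 1, zd.1 j) ∧
  (0 ≤ dd m zd.2 m) ∧
  (∀ j, 0 ≤ zd.1 j) ∧
  (∀ j, j ∉ SS n m S m → zd.1 j ≤ 1) ∧
  (∀ i : ℕ, 1 ≤ i → i + 1 ≤ m → dd m zd.2 (i + 1) ≤ dd m zd.2 i) ∧
  (∀ i : ℕ, 1 ≤ i → i + 1 ≤ m →
    dd m zd.2 i - dd m zd.2 (i + 1) ≤ ∑ j ∈ SS n m S (i + 1) \ SS n m S i, zd.1 j)

def FollowsPattern (n : ℕ) (α α' : Fin n → ℝ) : Prop :=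
  (∀ j, (0 ≤ α j → 0 ≤ α' j) ∧ (α j ≤ 0 → α' j ≤ 0)) ∧
  (∀ j₁ j₂ : Fin n, α j₂ ≤ α j₁ → α' j₂ ≤ α' j₁)

def IsFacetSet {E : Type*} [AddCommGroup E] [Module ℝ E] (P : Set E) (F : Set E) : Prop :=
  ∃ (f : E →ₗ[ℝ] ℝ) (c : ℝ), (∀ x ∈ P, f x ≤ c) ∧
    F = {x ∈ convexHull ℝ P | f x = c} ∧
    Module.finrank ℝ (affineSpan ℝ F).direction + 1 =
      Module.finrank ℝ (affineSpan ℝ P).direction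

/-!
The points of `Xset` are the vertices of the sets `Z` with `l ≤ #Z ≤ u`, and by nestedness the `δ`
part of such a vertex only depends on its level `k`, the largest index with `S_k ∩ Z = ∅`. At level
`k < p` the mixing functional is `-#(S' ∩ Z)`, and at level `k ≥ p` it telescopes to
`l - #Z - #((S' ∪ S_k)ᶜ \ Z)`; both are nonpositive, and they tell which vertices are tight.
There are enough tight vertices: adding `j ∉ S'` to a tight set of level `0` yields the direction
`e_j`, exchanging two elements of `S'` at level `p` yields `e_j - e_{j₀}`, and comparing consecutive
levels yields every `δ`-direction. Together with the single vector `e_{j₀}` these directions span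
the whole space.
-/

theorem isFacet_of_vectorSpan_sup_span_singleton_eq_top {E : Type*} [AddCommGroup E] [Module ℝ E]
    [FiniteDimensional ℝ E] {P : Set E} {f : E → ℝ} {c : ℝ} (hf : IsLinearMap ℝ f)
    (hvalid : ∀ x ∈ P, f x ≤ c) {x y v : E} (hx : x ∈ P) (hxc : f x = c) (hy : y ∈ P)
    (hyc : f y ≠ c) (hv : vectorSpan ℝ {x ∈ P | f x = c} ⊔ Submodule.span ℝ {v} = ⊤) :
    IsFacet P f c := by
  refine ⟨hvalid, ?_⟩
  set F : E →ₗ[ℝ] ℝ := hf.mk' f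
  rw [direction_affineSpan, direction_affineSpan]
  set D := vectorSpan ℝ {x ∈ convexHull ℝ P | f x = c}
  have hyx : F (y - x) ≠ 0 := by
    rw [map_sub, sub_ne_zero]
    exact fun h => hyc (h.trans hxc)
  have hF : F ≠ 0 := fun h => hyx (by rw [h, LinearMap.zero_apply])
  have hker_ne : LinearMap.ker F ≠ ⊤ := mt LinearMap.ker_eq_top.1 hF
  have hDker : D ≤ LinearMap.ker F := by
    refine Submodule.span_le.2 ?_
    rintro _ ⟨a, ha, b, hb, rfl⟩
    exact LinearMap.mem_ker.2 ((map_sub F a b).trans (sub_eq_zero.2 (ha.2.trans hb.2.symm)))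
  have hface : {x ∈ P | f x = c} ⊆ {x ∈ convexHull ℝ P | f x = c} := fun a ha =>
    ⟨subset_convexHull ℝ P ha.1, ha.2⟩
  have hDv : Submodule.span ℝ {v} ⊔ D = ⊤ := by
    rw [sup_comm, eq_top_iff, ← hv]
    exact sup_le_sup_right (vectorSpan_mono ℝ hface) _
  have hvD : v ∉ D := fun h => hker_ne <| top_le_iff.1 <| by
    rwa [← hDv, sup_eq_right.2 ((Submodule.span_singleton_le_iff_mem _ _).2 h)]
  have hD : IsCoatom D := covBy_top_iff.1 (hDv ▸ Submodule.covBy_span_singleton_sup hvD)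
  have hDP : D ≤ vectorSpan ℝ P := by
    rw [← direction_affineSpan ℝ P, ← affineSpan_convexHull (𝕜 := ℝ), direction_affineSpan]
    exact vectorSpan_mono ℝ fun a ha => ha.1
  have hP : vectorSpan ℝ P = ⊤ := hD.2 _ <| lt_of_le_of_ne hDP fun h =>
    hyx (hDker (h ▸ vsub_mem_vectorSpan ℝ hy hx))
  rw [hP, finrank_top, ← (hD.le_iff_eq hker_ne).1 hDker]
  exact Module.Dual.finrank_ker_add_one_of_ne_zero hF

theorem eq_top_of_single_mem_of_exists_single_mem {ι κ R : Type*} [Ring R] [Finite ι] [Finite κ]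
    [DecidableEq ι] [DecidableEq κ] {W : Submodule R ((ι → R) × (κ → R))}
    (hfst : ∀ j, ((Pi.single j 1, 0) : (ι → R) × (κ → R)) ∈ W)
    (hsnd : ∀ i, ∃ a, (a, Pi.single i 1) ∈ W) : W = ⊤ := by
  have hinl : W.comap (LinearMap.inl R (ι → R) (κ → R)) = ⊤ := by
    rw [← top_le_iff, ← (Pi.basisFun R ι).span_eq, Submodule.span_le]
    rintro _ ⟨j, rfl⟩
    simpa using hfst j
  have hinr : W.comap (LinearMap.inr R (ι → R) (κ → R)) = ⊤ := by
    rw [← top_le_iff, ← (Pi.basisFun R κ).span_eq, Submodule.span_le]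
    rintro _ ⟨i, rfl⟩
    obtain ⟨a, ha⟩ := hsnd i
    have ha' : (a, 0) ∈ W := Submodule.eq_top_iff'.1 hinl a
    simpa using W.sub_mem ha ha'
  refine Submodule.eq_top_iff'.2 fun x => ?_
  simpa using W.add_mem (Submodule.eq_top_iff'.1 hinl x.1) (Submodule.eq_top_iff'.1 hinr x.2)

theorem sup_span_single_eq_top {ι κ R : Type*} [Ring R] [Finite ι] [Finite κ] [DecidableEq ι]
    [DecidableEq κ] {W : Submodule R ((ι → R) × (κ → R))} {T : Set ι} {j₀ : ι}
    (hout : ∀ j ∉ T, (Pi.single j 1, 0) ∈ W)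
    (hin : ∀ j ∈ T, (Pi.single j 1 - Pi.single j₀ 1, 0) ∈ W)
    (hsnd : ∀ i, ∃ a, (a, Pi.single i 1) ∈ W) :
    W ⊔ Submodule.span R {(Pi.single j₀ 1, 0)} = ⊤ := by
  refine eq_top_of_single_mem_of_exists_single_mem (fun j => ?_) fun i => ?_
  · by_cases hj : j ∈ T
    · simpa using add_mem (Submodule.mem_sup_left (hin j hj))
        (Submodule.mem_sup_right (Submodule.mem_span_singleton_self (Pi.single j₀ 1, 0)))
    · exact Submodule.mem_sup_left (hout j hj)
  · obtain ⟨a, ha⟩ := hsnd i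
    exact ⟨a, Submodule.mem_sup_left ha⟩

theorem isLinearMap_sum_mul {ι R M : Type*} [CommSemiring R] [AddCommMonoid M] [Module R M]
    {s : Finset ι} (c : ι → R) {f : ι → M → R} (hf : ∀ i ∈ s, IsLinearMap R (f i)) :
    IsLinearMap R fun x => ∑ i ∈ s, c i * f i x where
  map_add x y := by
    rw [← sum_add_distrib]
    exact sum_congr rfl fun i hi => by rw [(hf i hi).map_add, mul_add]
  map_smul r x := by
    rw [smul_sum]
    exact sum_congr rfl fun i hi => by rw [(hf i hi).map_smul, mul_smul_comm]

theorem sum_Icc_sub_mul_ite_le {R : Type*} [Ring R] (g : ℕ → R) {p k m : ℕ} (hpk : p ≤ k)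
    (hkm : k ≤ m) :
    ∑ i ∈ Icc (p + 1) m, (g i - g (i - 1)) * (if i ≤ k then 1 else 0) = g k - g p := by
  have htrunc : {i ∈ Icc (p + 1) m | i ≤ k} = Icc (p + 1) k := by
    ext i
    simp only [mem_filter, mem_Icc]
    omega
  simp only [mul_ite, mul_one, mul_zero]
  rw [← sum_filter, htrunc]
  clear htrunc hkm
  induction k, hpk using Nat.le_induction with
  | base => simp
  | succ k hk ih =>
    rw [sum_Icc_succ_top (by omega), ih, Nat.add_sub_cancel, sub_add_sub_cancel']

theorem card_union_add_card_add_card_compl_sdiff {α : Type*} [Fintype α] [DecidableEq α]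
    (A : Finset α) {B Z : Finset α} (h : Disjoint B Z) :
    #(A ∪ B) + #Z + #((A ∪ B)ᶜ \ Z) = Fintype.card α + #(A ∩ Z) := by
  have hinter : (A ∪ B) ∩ Z = A ∩ Z := by
    rw [union_inter_distrib_right, disjoint_iff_inter_eq_empty.1 h, union_empty]
  have hcompl : (A ∪ B)ᶜ \ Z = (A ∪ B ∪ Z)ᶜ := by
    rw [compl_union (A ∪ B), sdiff_eq_inter_compl]
  have hunion := card_union_add_card_inter (A ∪ B) Z
  have hcard := card_add_card_compl (A ∪ B ∪ Z)
  rw [hinter] at hunion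
  rw [hcompl]
  omega

section Chain

variable {n m k : ℕ} {S : Fin m → Finset (Fin n)} {Z : Finset (Fin n)}

theorem SS_zero : SS n m S 0 = ∅ := by
  simp [SS]

theorem SS_succ (i : Fin m) : SS n m S (i + 1) = S i := by
  simp [SS]

theorem SS_of_lt (h : m < k) : SS n m S k = univ := by
  simp [SS, h.not_ge, Nat.ne_zero_of_lt h]

theorem SS_mono (hS : Monotone S) : Monotone (SS n m S) := by
  refine monotone_nat_of_le_succ fun k => ?_
  rcases k with - | k
  · exact SS_zero.trans_le (empty_subset _)
  · by_cases hk : k + 1 < m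
    · rw [SS_succ ⟨k, by omega⟩, SS_succ ⟨k + 1, hk⟩]
      exact hS (Fin.mk_le_mk.2 k.le_succ)
    · rw [SS_of_lt (by omega : m < k + 1 + 1)]
      exact subset_univ _

theorem SS_ssubset_SS_succ (hS : StrictMono S) (hbot : (SS n m S 1).Nonempty)
    (htop : #(SS n m S m) < n) (hk : k ≤ m) : SS n m S k ⊂ SS n m S (k + 1) := by
  rcases k with - | k
  · rwa [SS_zero, empty_ssubset]
  · rcases hk.eq_or_lt with rfl | hk
    · rwa [SS_of_lt (Nat.lt_succ_self _), ssubset_univ_iff, ← card_lt_iff_ne_univ, Fintype.card_fin]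
    · rw [SS_succ ⟨k, by omega⟩, SS_succ ⟨k + 1, hk⟩]
      exact hS (Fin.mk_lt_mk.2 k.lt_succ_self)

theorem card_SS_lt_card_SS (hS : StrictMono S) (hbot : (SS n m S 1).Nonempty)
    (htop : #(SS n m S m) < n) (hk : k < m) : #(SS n m S k) < #(SS n m S m) :=
  (card_lt_card (SS_ssubset_SS_succ hS hbot htop hk.le)).trans_le
    (card_le_card (SS_mono hS.monotone hk))

/-- The level of `Z` in the chain `∅ = S_0 ⊂ S_1 ⊂ ⋯ ⊂ S_m`: the largest index `k ≤ m` for which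
`S_k` misses `Z`. It is the number of ones in the `δ` part of the vertex given by `Z`. -/
def chainLevel (S : Fin m → Finset (Fin n)) (Z : Finset (Fin n)) : ℕ :=
  Nat.findGreatest (fun k => Disjoint (SS n m S k) Z) m

theorem chainLevel_le (S : Fin m → Finset (Fin n)) (Z : Finset (Fin n)) : chainLevel S Z ≤ m :=
  Nat.findGreatest_le m

theorem disjoint_SS_chainLevel (S : Fin m → Finset (Fin n)) (Z : Finset (Fin n)) :
    Disjoint (SS n m S (chainLevel S Z)) Z :=
  Nat.findGreatest_spec (P := fun k => Disjoint (SS n m S k) Z) m.zero_le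
    (SS_zero ▸ disjoint_empty_left Z)

theorem disjoint_SS_iff_le_chainLevel (hS : Monotone S) (hk : k ≤ m) :
    Disjoint (SS n m S k) Z ↔ k ≤ chainLevel S Z :=
  ⟨fun h => Nat.le_findGreatest hk h,
    fun h => (disjoint_SS_chainLevel S Z).mono_left (SS_mono hS h)⟩

theorem chainLevel_eq (hS : Monotone S) (hk : k ≤ m) (hdisj : Disjoint (SS n m S k) Z)
    (hndisj : ¬ Disjoint (SS n m S (k + 1)) Z) : chainLevel S Z = k := by
  refine le_antisymm (not_lt.1 fun h => ?_) ((disjoint_SS_iff_le_chainLevel hS hk).1 hdisj)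
  exact hndisj ((disjoint_SS_chainLevel S Z).mono_left (SS_mono hS h))

theorem chainLevel_eq_zero (hS : Monotone S) (hZ : ¬ Disjoint (SS n m S 1) Z) :
    chainLevel S Z = 0 :=
  chainLevel_eq hS m.zero_le (SS_zero ▸ disjoint_empty_left Z) hZ

end Chain

section Vertex

variable {n m l u : ℕ} {S : Fin m → Finset (Fin n)} {Z Z' : Finset (Fin n)} {j : Fin n}

/-- The point `(z, δ)` of the multilinear set in which `z` is the indicator vector of `Z`, so that
`δ_i = 1` exactly when `S_i` misses `Z`. -/
def vertexOf (S : Fin m → Finset (Fin n)) (Z : Finset (Fin n)) : (Fin n → ℝ) × (Fin m → ℝ) :=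
  (fun j => if j ∈ Z then 1 else 0, fun i => if Disjoint (S i) Z then 1 else 0)

theorem sum_vertexOf_fst (T : Finset (Fin n)) : ∑ j ∈ T, (vertexOf S Z).1 j = #(T ∩ Z) := by
  simp [vertexOf]

theorem vertexOf_snd_eq_prod (i : Fin m) :
    (vertexOf S Z).2 i = ∏ j ∈ S i, (1 - (vertexOf S Z).1 j) := by
  have hterm : ∀ j, 1 - (vertexOf S Z).1 j = if j ∉ Z then 1 else 0 := fun j => by
    by_cases hj : j ∈ Z <;> simp [vertexOf, hj]
  simp only [hterm, prod_ite_zero, prod_const_one, ← disjoint_left]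
  rfl

theorem vertexOf_mem_Xset_iff : vertexOf S Z ∈ Xset n m l u S ↔ l ≤ #Z ∧ #Z ≤ u := by
  have hfst : ∀ j, (vertexOf S Z).1 j = 0 ∨ (vertexOf S Z).1 j = 1 := fun _ =>
    (ite_eq_or_eq _ _ _).symm
  have hsnd : ∀ i, (vertexOf S Z).2 i = 0 ∨ (vertexOf S Z).2 i = 1 := fun _ =>
    (ite_eq_or_eq _ _ _).symm
  simp only [Xset, Set.mem_ofPred_eq, hfst, hsnd, ← vertexOf_snd_eq_prod, sum_vertexOf_fst,
    univ_inter, Nat.cast_le, implies_true, true_and]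

theorem exists_vertexOf_eq_of_mem_Xset {x : (Fin n → ℝ) × (Fin m → ℝ)} (hx : x ∈ Xset n m l u S) :
    ∃ Z, vertexOf S Z = x := by
  obtain ⟨hbin, -, hprod, -, -⟩ := hx
  have hfst : (vertexOf S {j | x.1 j = 1}).1 = x.1 := by
    funext j
    rcases hbin j with h | h <;> simp [vertexOf, h]
  refine ⟨_, Prod.ext hfst (funext fun i => ?_)⟩
  rw [vertexOf_snd_eq_prod, hfst, hprod]

theorem vertexOf_insert_fst (hj : j ∉ Z) :
    (vertexOf S (insert j Z)).1 = (vertexOf S Z).1 + Pi.single j 1 := by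
  funext a
  rcases eq_or_ne a j with rfl | ha
  · simp [vertexOf, hj]
  · simp [vertexOf, ha]

theorem vertexOf_snd (hS : Monotone S) (i : Fin m) :
    (vertexOf S Z).2 i = if (i : ℕ) + 1 ≤ chainLevel S Z then 1 else 0 := by
  rw [← if_congr (disjoint_SS_iff_le_chainLevel hS i.2) rfl rfl, SS_succ]
  rfl

theorem vertexOf_sub_vertexOf_of_chainLevel_eq (hS : Monotone S)
    (h : chainLevel S Z = chainLevel S Z') :
    vertexOf S Z - vertexOf S Z' = ((vertexOf S Z).1 - (vertexOf S Z').1, 0) := by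
  refine Prod.ext rfl (funext fun i => ?_)
  rw [Prod.snd_sub, Pi.sub_apply, vertexOf_snd hS, vertexOf_snd hS, h, sub_self]
  rfl

theorem vertexOf_sub_vertexOf_of_chainLevel_eq_succ (hS : Monotone S) {i : Fin m}
    (hZ : chainLevel S Z = i + 1) (hZ' : chainLevel S Z' = i) :
    vertexOf S Z - vertexOf S Z' = ((vertexOf S Z).1 - (vertexOf S Z').1, Pi.single i 1) := by
  refine Prod.ext rfl (funext fun a => ?_)
  rw [Prod.snd_sub, Pi.sub_apply, vertexOf_snd hS, vertexOf_snd hS, hZ, hZ']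
  simp only [Pi.single_apply, Fin.ext_iff]
  split_ifs <;> first | omega | norm_num

theorem dd_vertexOf (hS : Monotone S) (i : ℕ) :
    dd m (vertexOf S Z).2 i = if i ≤ chainLevel S Z then 1 else 0 := by
  have hlevel := chainLevel_le S Z
  by_cases hi : 1 ≤ i ∧ i ≤ m
  · simp only [dd, dif_pos hi, vertexOf_snd hS, Nat.sub_add_cancel hi.1]
  · rcases Nat.eq_zero_or_pos i with rfl | hpos
    · simp [dd]
    · rw [dd, dif_neg hi, if_neg hpos.ne', if_neg (by omega)]

end Vertex

section MixingFunctional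

variable {n m l u p k : ℕ} {S : Fin m → Finset (Fin n)} {S' Z : Finset (Fin n)}

theorem isLinearMap_dd (hk : k ≠ 0) : IsLinearMap ℝ fun δ : Fin m → ℝ => dd m δ k := by
  constructor <;> intros <;> unfold dd <;> split_ifs <;> simp

theorem isLinearMap_mixGeLHS (hp : p ≠ 0) : IsLinearMap ℝ (mixGeLHS n m l S p S') := by
  have hddp := isLinearMap_dd (m := m) hp
  have hsum := isLinearMap_sum_mul (s := Icc (p + 1) m)
    (fun i => (#(S' ∪ SS n m S i) : ℝ) - #(S' ∪ SS n m S (i - 1))) fun i hi =>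
      isLinearMap_dd (m := m) (k := i) (Nat.ne_zero_of_lt (mem_Icc.1 hi).1)
  constructor <;> intros
  · simp only [mixGeLHS, Prod.snd_add, Prod.fst_add, Pi.add_apply, hddp.map_add, hsum.map_add,
      sum_add_distrib]
    ring
  · simp only [mixGeLHS, Prod.smul_snd, Prod.smul_fst, Pi.smul_apply, hddp.map_smul,
      hsum.map_smul, smul_eq_mul, ← mul_sum]
    ring

theorem mixGeLHS_vertexOf_of_chainLevel_lt (hS : Monotone S) (h : chainLevel S Z < p) :
    mixGeLHS n m l S p S' (vertexOf S Z) = -#(S' ∩ Z) := by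
  have hsum : ∑ i ∈ Icc (p + 1) m, ((#(S' ∪ SS n m S i) : ℝ) - #(S' ∪ SS n m S (i - 1))) *
      (if i ≤ chainLevel S Z then 1 else 0) = 0 := sum_eq_zero fun i hi => by
    have := (mem_Icc.1 hi).1
    rw [if_neg (by omega), mul_zero]
  simp only [mixGeLHS, dd_vertexOf hS, sum_vertexOf_fst, hsum, if_neg h.not_ge]
  ring

theorem mixGeLHS_vertexOf_of_le_chainLevel (hS : Monotone S) (h : p ≤ chainLevel S Z) :
    mixGeLHS n m l S p S' (vertexOf S Z) =
      l - #Z - #((S' ∪ SS n m S (chainLevel S Z))ᶜ \ Z) := by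
  have hcard : (#(S' ∪ SS n m S (chainLevel S Z)) : ℝ) + #Z +
      #((S' ∪ SS n m S (chainLevel S Z))ᶜ \ Z) = n + #(S' ∩ Z) := by
    exact_mod_cast Fintype.card_fin n ▸
      card_union_add_card_add_card_compl_sdiff S' (disjoint_SS_chainLevel S Z)
  simp only [mixGeLHS, dd_vertexOf hS, sum_vertexOf_fst, if_pos h,
    sum_Icc_sub_mul_ite_le (fun i => (#(S' ∪ SS n m S i) : ℝ)) h (chainLevel_le S Z)]
  linarith

theorem mixGeLHS_nonpos_of_mem_Xset (hS : Monotone S) {x : (Fin n → ℝ) × (Fin m → ℝ)}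
    (hx : x ∈ Xset n m l u S) : mixGeLHS n m l S p S' x ≤ 0 := by
  obtain ⟨Z, rfl⟩ := exists_vertexOf_eq_of_mem_Xset hx
  have hl : (l : ℝ) ≤ #Z := Nat.cast_le.2 (vertexOf_mem_Xset_iff.1 hx).1
  rcases lt_or_ge (chainLevel S Z) p with h | h
  · rw [mixGeLHS_vertexOf_of_chainLevel_lt hS h]
    exact neg_nonpos.2 (Nat.cast_nonneg _)
  · rw [mixGeLHS_vertexOf_of_le_chainLevel hS h]
    linarith [(#((S' ∪ SS n m S (chainLevel S Z))ᶜ \ Z)).cast_nonneg (α := ℝ)]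

end MixingFunctional

section MixingFace

variable {n m l u p k : ℕ} {S : Fin m → Finset (Fin n)} {S' Z : Finset (Fin n)} {j j₀ : Fin n}

/-- The points of the multilinear set at which the mixing inequality `Mix≥(S', p)` is tight. -/
def mixGeFace (l u : ℕ) (S : Fin m → Finset (Fin n)) (p : ℕ) (S' : Finset (Fin n)) :
    Set ((Fin n → ℝ) × (Fin m → ℝ)) :=
  {x ∈ Xset n m l u S | mixGeLHS n m l S p S' x = 0}

theorem vertexOf_mem_mixGeFace_of_chainLevel_lt (hS : Monotone S) (h : chainLevel S Z < p)
    (hl : l ≤ #Z) (hu : #Z ≤ u) (hZ : Disjoint S' Z) : vertexOf S Z ∈ mixGeFace l u S p S' := by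
  refine ⟨vertexOf_mem_Xset_iff.2 ⟨hl, hu⟩, ?_⟩
  rw [mixGeLHS_vertexOf_of_chainLevel_lt hS h, disjoint_iff_inter_eq_empty.1 hZ, card_empty,
    Nat.cast_zero, neg_zero]

theorem vertexOf_mem_mixGeFace_of_le_chainLevel (hS : Monotone S) (h : p ≤ chainLevel S Z)
    (hl : #Z = l) (hlu : l ≤ u) (hZ : (S' ∪ SS n m S (chainLevel S Z))ᶜ ⊆ Z) :
    vertexOf S Z ∈ mixGeFace l u S p S' := by
  refine ⟨vertexOf_mem_Xset_iff.2 ⟨hl.ge, hl.trans_le hlu⟩, ?_⟩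
  rw [mixGeLHS_vertexOf_of_le_chainLevel hS h, hl, sdiff_eq_empty_iff_subset.2 hZ, card_empty,
    Nat.cast_zero, sub_self, sub_zero]

theorem exists_vertexOf_mem_mixGeFace_of_lt (hS : Monotone S) (hpm : p ≤ m) (hkp : k < p)
    (hl : 1 ≤ l) (hlu : l ≤ u) (hdisj : Disjoint S' (SS n m S p))
    (hcard : #(S' ∪ SS n m S (p - 1)) + l ≤ n) (hk : SS n m S k ⊂ SS n m S (k + 1)) :
    ∃ Z, vertexOf S Z ∈ mixGeFace l u S p S' ∧ chainLevel S Z = k := by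
  obtain ⟨x, hx, hxk⟩ := exists_of_ssubset hk
  have hxS' : x ∉ S' := disjoint_right.1 hdisj (SS_mono hS hkp hx)
  have hcardk : #(S' ∪ SS n m S k) ≤ #(S' ∪ SS n m S (p - 1)) :=
    card_le_card (union_subset_union_right (SS_mono hS (by omega)))
  obtain ⟨Z, hxZ, hZ, hZl⟩ := exists_subsuperset_card_eq
    (s := {x}) (t := (S' ∪ SS n m S k)ᶜ) (n := l) (by simp [hxk, hxS']) (by simpa using hl)
    (by rw [card_compl, Fintype.card_fin]; omega)
  obtain ⟨hS'Z, hSkZ⟩ := disjoint_union_left.1 (disjoint_compl_right.mono_right hZ)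
  have hlevel : chainLevel S Z = k := chainLevel_eq hS (by omega) hSkZ
    (not_disjoint_iff.2 ⟨x, hx, singleton_subset_iff.1 hxZ⟩)
  exact ⟨Z, vertexOf_mem_mixGeFace_of_chainLevel_lt hS (by omega) hZl.ge (by omega) hS'Z, hlevel⟩

theorem exists_vertexOf_mem_mixGeFace_of_le (hS : Monotone S) (hpk : p ≤ k) (hkm : k ≤ m)
    (hlu : l ≤ u) (hp : n < #(S' ∪ SS n m S p) + l) (hm : #(SS n m S m) + l ≤ n)
    (hk : SS n m S k ⊂ SS n m S (k + 1)) :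
    ∃ Z, vertexOf S Z ∈ mixGeFace l u S p S' ∧ chainLevel S Z = k := by
  obtain ⟨x, hx, hxk⟩ := exists_of_ssubset hk
  have hcardk : #(S' ∪ SS n m S p) ≤ #(S' ∪ SS n m S k) :=
    card_le_card (union_subset_union_right (SS_mono hS hpk))
  have hcardm : #(SS n m S k) ≤ #(SS n m S m) := card_le_card (SS_mono hS hkm)
  have hcompl : #(S' ∪ SS n m S k)ᶜ < l := by
    have := card_compl_add_card (S' ∪ SS n m S k)
    rw [Fintype.card_fin] at this
    omega
  obtain ⟨Z, hZ, hZk, hZl⟩ := exists_subsuperset_card_eq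
    (s := insert x (S' ∪ SS n m S k)ᶜ) (t := (SS n m S k)ᶜ) (n := l)
    (insert_subset (mem_compl.2 hxk) (compl_subset_compl.2 subset_union_right))
    ((card_insert_le _ _).trans hcompl)
    (by rw [card_compl, Fintype.card_fin]; omega)
  obtain ⟨hxZ, hZ⟩ := insert_subset_iff.1 hZ
  have hlevel : chainLevel S Z = k := chainLevel_eq hS hkm (disjoint_compl_right.mono_right hZk)
    (not_disjoint_iff.2 ⟨x, hx, hxZ⟩)
  exact ⟨Z, vertexOf_mem_mixGeFace_of_le_chainLevel hS (hlevel ▸ hpk) hZl hlu (hlevel ▸ hZ),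
    hlevel⟩

theorem exists_vertexOf_mem_mixGeFace (hS : StrictMono S) (hpm : p ≤ m) (hl : 1 ≤ l) (hlu : l ≤ u)
    (hS1 : (SS n m S 1).Nonempty) (hm : #(SS n m S m) + l ≤ n) (hdisj : Disjoint S' (SS n m S p))
    (hprev : #(S' ∪ SS n m S (p - 1)) + l ≤ n) (hp : n < #(S' ∪ SS n m S p) + l) (hk : k ≤ m) :
    ∃ Z, vertexOf S Z ∈ mixGeFace l u S p S' ∧ chainLevel S Z = k := by
  have hstep := SS_ssubset_SS_succ hS hS1 (by omega) hk
  rcases lt_or_ge k p with h | h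
  · exact exists_vertexOf_mem_mixGeFace_of_lt hS.monotone hpm h hl hlu hdisj hprev hstep
  · exact exists_vertexOf_mem_mixGeFace_of_le hS.monotone h hk hlu hp hm hstep

theorem single_mem_vectorSpan_mixGeFace (hS : Monotone S) (hp : 1 ≤ p) (hl : 1 ≤ l)
    (hlu : l < u) (hS1 : 2 ≤ #(SS n m S 1)) (hdisj : Disjoint S' (SS n m S p))
    (hcard : #S' + l < n) (hj : j ∉ S') :
    (Pi.single j 1, 0) ∈ vectorSpan ℝ (mixGeFace l u S p S') := by
  obtain ⟨t, ht, htj⟩ := exists_mem_ne hS1 j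
  have htS' : t ∉ S' := disjoint_right.1 hdisj (SS_mono hS hp ht)
  obtain ⟨Z, htZ, hZ, hZl⟩ := exists_subsuperset_card_eq
    (s := {t}) (t := (insert j S')ᶜ) (n := l) (by simp [htj, htS']) (by simpa using hl)
    (by rw [card_compl, Fintype.card_fin, card_insert_of_notMem hj]; omega)
  rw [singleton_subset_iff] at htZ
  obtain ⟨hjZ, hS'Z⟩ := disjoint_insert_left.1 (disjoint_compl_right.mono_right hZ)
  have hcardj := card_insert_of_notMem hjZ
  have hlevel : chainLevel S Z = 0 := chainLevel_eq_zero hS (not_disjoint_iff.2 ⟨t, ht, htZ⟩)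
  have hlevelj : chainLevel S (insert j Z) = 0 :=
    chainLevel_eq_zero hS (not_disjoint_iff.2 ⟨t, ht, mem_insert_of_mem htZ⟩)
  have hface := vertexOf_mem_mixGeFace_of_chainLevel_lt (p := p) hS (by omega) hZl.ge
    (by omega : #Z ≤ u) hS'Z
  have hfacej := vertexOf_mem_mixGeFace_of_chainLevel_lt (p := p) hS (by omega)
    (by omega : l ≤ #(insert j Z)) (by omega : #(insert j Z) ≤ u)
    (disjoint_insert_right.2 ⟨hj, hS'Z⟩)
  have hsub := vsub_mem_vectorSpan ℝ hfacej hface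
  rwa [vsub_eq_sub, vertexOf_sub_vertexOf_of_chainLevel_eq hS (hlevelj.trans hlevel.symm),
    vertexOf_insert_fst hjZ, add_sub_cancel_left] at hsub

theorem not_disjoint_SS_succ_insert (hnext : p < m → ¬ SS n m S (p + 1) \ SS n m S p ⊆ S')
    (hZ : (S' ∪ SS n m S p)ᶜ ⊆ Z) : ¬ Disjoint (SS n m S (p + 1)) (insert j Z) := by
  rw [not_disjoint_iff]
  rcases lt_or_ge p m with h | h
  · obtain ⟨y, hy, hyS'⟩ := not_subset.1 (hnext h)
    obtain ⟨hy, hyp⟩ := mem_sdiff.1 hy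
    exact ⟨y, hy, mem_insert_of_mem (hZ (by simp [hyS', hyp]))⟩
  · exact ⟨j, SS_of_lt (Nat.lt_succ_of_le h) ▸ mem_univ j, mem_insert_self j Z⟩

theorem single_sub_single_mem_vectorSpan_mixGeFace (hS : Monotone S) (hpm : p ≤ m) (hlu : l ≤ u)
    (hdisj : Disjoint S' (SS n m S p)) (hlt : #(SS n m S p) + l < n)
    (hp : n < #(S' ∪ SS n m S p) + l)
    (hnext : p < m → ¬ SS n m S (p + 1) \ SS n m S p ⊆ S') (hj : j ∈ S') (hj₀ : j₀ ∈ S') :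
    (Pi.single j 1 - Pi.single j₀ 1, 0) ∈ vectorSpan ℝ (mixGeFace l u S p S') := by
  have hcompl := card_compl_add_card (S' ∪ SS n m S p)
  rw [Fintype.card_fin] at hcompl
  have hpair : #(insert j (insert j₀ (SS n m S p))) ≤ #(SS n m S p) + 2 :=
    (card_insert_le _ _).trans (Nat.succ_le_succ (card_insert_le _ _))
  obtain ⟨V, hV, hVp, hVl⟩ := exists_subsuperset_card_eq
    (s := (S' ∪ SS n m S p)ᶜ) (t := (insert j (insert j₀ (SS n m S p)))ᶜ) (n := l - 1)
    (compl_subset_compl.2 (insert_subset (mem_union_left _ hj)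
      (insert_subset (mem_union_left _ hj₀) subset_union_right)))
    (by omega) (by rw [card_compl, Fintype.card_fin]; omega)
  obtain ⟨hjV, hVp⟩ := disjoint_insert_left.1 (disjoint_compl_right.mono_right hVp)
  obtain ⟨hj₀V, hVp⟩ := disjoint_insert_left.1 hVp
  have hlevel : ∀ x ∈ S', chainLevel S (insert x V) = p := fun x hx =>
    chainLevel_eq hS hpm (disjoint_insert_right.2 ⟨disjoint_left.1 hdisj hx, hVp⟩)
      (not_disjoint_SS_succ_insert hnext hV)
  have hface : ∀ x ∈ S', x ∉ V → vertexOf S (insert x V) ∈ mixGeFace l u S p S' := by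
    intro x hx hxV
    refine vertexOf_mem_mixGeFace_of_le_chainLevel hS (hlevel x hx).ge ?_ hlu ?_
    · rw [card_insert_of_notMem hxV]
      omega
    · rw [hlevel x hx]
      exact hV.trans (subset_insert x V)
  have hsub := vsub_mem_vectorSpan ℝ (hface j hj hjV) (hface j₀ hj₀ hj₀V)
  rwa [vsub_eq_sub,
    vertexOf_sub_vertexOf_of_chainLevel_eq hS ((hlevel j hj).trans (hlevel j₀ hj₀).symm),
    vertexOf_insert_fst hjV, vertexOf_insert_fst hj₀V, add_sub_add_left_eq_sub] at hsub

theorem exists_mem_vectorSpan_mixGeFace_snd_eq_single (hS : Monotone S)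
    (hlevels : ∀ k ≤ m, ∃ Z, vertexOf S Z ∈ mixGeFace l u S p S' ∧ chainLevel S Z = k)
    (i : Fin m) : ∃ a, (a, Pi.single i 1) ∈ vectorSpan ℝ (mixGeFace l u S p S') := by
  obtain ⟨Z, hZ, hZi⟩ := hlevels (i + 1) i.2
  obtain ⟨Z', hZ', hZi'⟩ := hlevels i i.2.le
  have hsub := vsub_mem_vectorSpan ℝ hZ hZ'
  rw [vsub_eq_sub, vertexOf_sub_vertexOf_of_chainLevel_eq_succ hS hZi hZi'] at hsub
  exact ⟨_, hsub⟩

theorem exists_mem_Xset_mixGeLHS_ne_zero (hS : Monotone S) (hp : 1 ≤ p) (hl : 1 ≤ l) (hlu : l < u)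
    (hln : l < n) (hS1 : (SS n m S 1).Nonempty) (hS' : S'.Nonempty) :
    ∃ x ∈ Xset n m l u S, mixGeLHS n m l S p S' x ≠ 0 := by
  obtain ⟨s, hs⟩ := hS1
  obtain ⟨j, hj⟩ := hS'
  obtain ⟨Z, hsjZ, -, hZl⟩ := exists_subsuperset_card_eq
    (s := {s, j}) (t := univ) (n := l + 1) (subset_univ _) (card_le_two.trans (by omega))
    (by rw [card_univ, Fintype.card_fin]; omega)
  have hlevel : chainLevel S Z = 0 :=
    chainLevel_eq_zero hS (not_disjoint_iff.2 ⟨s, hs, hsjZ (by simp)⟩)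
  refine ⟨vertexOf S Z, vertexOf_mem_Xset_iff.2 ⟨by omega, by omega⟩, ?_⟩
  rw [mixGeLHS_vertexOf_of_chainLevel_lt hS (by omega), neg_ne_zero, Nat.cast_ne_zero, card_ne_zero]
  exact ⟨j, mem_inter.2 ⟨hj, hsjZ (by simp)⟩⟩

end MixingFace

theorem stmt17 (n m l u : ℕ) (S : Fin m → Finset (Fin n))
    (hn : 0 < n) (hm : 0 < m) (hu : 2 ≤ u) (hlu : l < u)
    (hnested : ∀ i j : Fin m, i < j → S i ⊂ S j)
    (hS1 : 2 ≤ (SS n m S 1).card)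
    (hSm : l ≤ n - (SS n m S m).card)
    (p : ℕ) (hp1 : 1 ≤ p) (hpm : p ≤ m)
    (S' : Finset (Fin n)) (hS'ne : S' ≠ Finset.univ)
    (h1 : (S' ∪ SS n m S (p - 1)).card ≤ n - l)
    (h2 : n - l < (S' ∪ SS n m S p).card)
    (hside : p < m ∨ (SS n m S m).card < n - l)
    (hL1 : S' ∩ SS n m S p = ∅)
    (hL2 : S'.card ≤ n - l - 1)
    (hL3 : p < m → ¬ (SS n m S (p + 1) \ SS n m S p ⊆ S')) :
    IsFacet (Xset n m l u S) (mixGeLHS n m l S p S') 0 := by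
  have hS : StrictMono S := fun i j hij => hnested i j hij
  have hdisj : Disjoint S' (SS n m S p) := disjoint_iff_inter_eq_empty.2 hL1
  have hunion := card_union_le S' (SS n m S p)
  have hunion_le := card_finset_fin_le (S' ∪ SS n m S p)
  have hSm_le := card_finset_fin_le (SS n m S m)
  have hSp_le : #(SS n m S p) ≤ #(SS n m S m) := card_le_card (SS_mono hS.monotone hpm)
  have hl : 1 ≤ l := by omega
  have hS1pos : (SS n m S 1).Nonempty := card_pos.1 (by omega)
  have hSp : #(SS n m S p) + l < n := by
    have := card_SS_lt_card_SS hS hS1pos (by omega) (k := p)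
    omega
  have hlevels := fun k => exists_vertexOf_mem_mixGeFace (k := k) hS hpm hl hlu.le hS1pos
    (by omega) hdisj (by omega) (by omega)
  obtain ⟨j₀, hj₀⟩ : S'.Nonempty := card_pos.1 (by omega)
  obtain ⟨Z, hZ, -⟩ := hlevels 0 hm.le
  obtain ⟨y, hy, hy0⟩ := exists_mem_Xset_mixGeLHS_ne_zero hS.monotone hp1 hl hlu (by omega) hS1pos
    ⟨j₀, hj₀⟩
  refine isFacet_of_vectorSpan_sup_span_singleton_eq_top (isLinearMap_mixGeLHS (by omega))
    (fun x => mixGeLHS_nonpos_of_mem_Xset hS.monotone) hZ.1 hZ.2 hy hy0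
    (sup_span_single_eq_top (T := S') (j₀ := j₀) (fun j hj => ?_) (fun j hj => ?_)
      (exists_mem_vectorSpan_mixGeFace_snd_eq_single hS.monotone hlevels))
  · exact single_mem_vectorSpan_mixGeFace hS.monotone hp1 hl hlu hS1 hdisj (by omega) hj
  · exact single_sub_single_mem_vectorSpan_mixGeFace hS.monotone hpm hlu.le hdisj hSp (by omega)
      hL3 hj hj₀
end
end

section
/- Let t ≥ 1 and let i_1,…,i_t ∈ I be distinct indices, writing S_{[k]} = S_{i_k} and δ_{[k]} = δ_{i_k}. Let S' ⊆ J and suppose |S'∖(S_{[1]}∩S_{[i]})| ≤ u for every i ∈ {2,…,t}. Then the inequality Σ_{j∈S'} z_j + (u − |S'∖S_{[1]}|)·δ_{[1]} + Σ_{i=2}^{t} |S' ∩ S_{[i]} ∖ (S_{[1]}∪⋯∪S_{[i−1]})|·δ_{[i]} ≤ u holds for every (z,δ) ∈ X^{l,u}. -/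
open Finset

noncomputable section

/-!
Write `P = S'` and `T k = S (idx k)`. Of the pieces `A k = (P ∩ T k) \ ⋃ k' < k, T k'` only two
properties matter: they are pairwise disjoint, and for `k ≠ k₀ = 0` they lie in `(P ∩ T k) \ T k₀`.

Call an index `k` active when `δ k = 1`; then `z ≤ 0` on `T k`. The pieces contribute `#B` to the
inequality, where `B` is the union of the active ones. If `z ≤ 0` also on a set `Z` disjoint from
`B`, then on `P` it can only be positive on `(P \ Z) \ B`, so that `∑ j ∈ P, z j + #B ≤ #(P \ Z)`.
Take `Z = T k₀` if `k₀` is active, and `Z = T k₀ ∩ T k` if `k₀` is inactive and some other `k` is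
active. If nothing is active, the cardinality bound on `z` suffices.
-/

section Counting

variable {ι κ R : Type*} [DecidableEq ι]

lemma sum_le_card_of_nonpos_sdiff [Semiring R] [PartialOrder R] [IsOrderedRing R]
    {z : ι → R} {P Q : Finset ι} (hQP : Q ⊆ P) (hQ : ∀ j ∈ Q, z j ≤ 1)
    (hPQ : ∀ j ∈ P \ Q, z j ≤ 0) : ∑ j ∈ P, z j ≤ #Q := by
  calc ∑ j ∈ P, z j = ∑ j ∈ P \ Q, z j + ∑ j ∈ Q, z j := (sum_sdiff hQP).symm
    _ ≤ 0 + #Q • (1 : R) := add_le_add (sum_nonpos hPQ) (sum_le_card_nsmul _ _ _ hQ)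
    _ = #Q := by rw [zero_add, nsmul_one]

lemma sum_add_card_le_card_sdiff [Semiring R] [PartialOrder R] [IsOrderedRing R]
    {z : ι → R} {P Z B : Finset ι} (hP : ∀ j ∈ P, z j ≤ 1) (hZ : ∀ j ∈ Z, z j ≤ 0)
    (hB : ∀ j ∈ B, z j ≤ 0) (hBP : B ⊆ P \ Z) :
    ∑ j ∈ P, z j + #B ≤ #(P \ Z) := by
  have hQP : (P \ Z) \ B ⊆ P := sdiff_subset.trans sdiff_subset
  have hsum : ∑ j ∈ P, z j ≤ #((P \ Z) \ B) := by
    refine sum_le_card_of_nonpos_sdiff hQP (fun j hj => hP j (hQP hj)) fun j hj => ?_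
    have hj' : j ∈ Z ∨ j ∈ B := by grind
    exact hj'.elim (hZ j) (hB j)
  calc ∑ j ∈ P, z j + #B ≤ #((P \ Z) \ B) + #B := by gcongr
    _ = #(P \ Z) := by rw [← Nat.cast_add, card_sdiff_add_card_eq_card hBP]

lemma sum_card_mul_eq_card_biUnion [Semiring R] [Nontrivial R] [DecidableEq R]
    {K : Finset κ} {A : κ → Finset ι} {δ : κ → R} (hδ : ∀ k ∈ K, δ k = 0 ∨ δ k = 1)
    (hA : (K : Set κ).PairwiseDisjoint A) :
    ∑ k ∈ K, (#(A k) : R) * δ k = #({k ∈ K | δ k = 1}.biUnion A) := by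
  rw [card_biUnion (hA.subset (coe_subset.2 (filter_subset _ K))), sum_filter, Nat.cast_sum]
  refine sum_congr rfl fun k hk => ?_
  rcases hδ k hk with h | h <;> simp [h]

lemma pairwise_disjoint_inter_sdiff_biUnion_lt [LinearOrder κ] [Fintype κ] (P : Finset ι)
    (T : κ → Finset ι) :
    Pairwise (Function.onFun Disjoint
      fun k => (P ∩ T k) \ (univ.filter fun k' => k' < k).biUnion T) := by
  refine (pairwise_disjoint_on _).2 fun k l hkl => disjoint_sdiff.mono_left ?_
  exact (sdiff_subset.trans inter_subset_right).trans
    (subset_biUnion_of_mem T (mem_filter.2 ⟨mem_univ k, hkl⟩))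

lemma inter_sdiff_biUnion_lt_subset [Preorder κ] [DecidableLT κ] [Fintype κ] (P : Finset ι)
    (T : κ → Finset ι) {k₀ k : κ} (h : k₀ < k) :
    (P ∩ T k) \ (univ.filter fun k' => k' < k).biUnion T ⊆ (P ∩ T k) \ T k₀ :=
  sdiff_subset_sdiff subset_rfl (subset_biUnion_of_mem T (mem_filter.2 ⟨mem_univ k₀, h⟩))

theorem stmt18_general [CommRing R] [LinearOrder R] [IsStrictOrderedRing R] {z : ι → R}
    {δ : κ → R} {u : R} {P : Finset ι} {T A : κ → Finset ι} {k₀ : κ} {K : Finset κ}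
    (hz : ∀ j ∈ P, z j ≤ 1) (hsum : ∑ j ∈ P, z j ≤ u)
    (hδ : ∀ k, δ k = 0 ∨ δ k = 1) (hzδ : ∀ k, ∀ j ∈ T k, z j + δ k ≤ 1)
    (hdisj : (K : Set κ).PairwiseDisjoint A) (hA : ∀ k ∈ K, A k ⊆ (P ∩ T k) \ T k₀)
    (hcard : ∀ k ∈ K, (#(P \ (T k₀ ∩ T k)) : R) ≤ u) :
    ∑ j ∈ P, z j + (u - #(P \ T k₀)) * δ k₀ + ∑ k ∈ K, (#(A k) : R) * δ k ≤ u := by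
  have hnonpos : ∀ k, δ k = 1 → ∀ j ∈ T k, z j ≤ 0 := fun k hk j hj => by
    simpa [hk] using hzδ k j hj
  rw [sum_card_mul_eq_card_biUnion (fun k _ => hδ k) hdisj]
  set B := {k ∈ K | δ k = 1}.biUnion A with hB_def
  have hBP : B ⊆ P \ T k₀ := biUnion_subset.2 fun k hk =>
    (hA k (mem_filter.1 hk).1).trans (sdiff_subset_sdiff inter_subset_left subset_rfl)
  have hB : ∀ j ∈ B, z j ≤ 0 := fun j hj => by
    obtain ⟨k, hk, hjk⟩ := mem_biUnion.1 hj
    obtain ⟨hkK, hk⟩ := mem_filter.1 hk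
    exact hnonpos k hk j (mem_inter.1 (mem_sdiff.1 (hA k hkK hjk)).1).2
  rcases hδ k₀ with h₀ | h₀
  · rw [h₀, mul_zero, add_zero]
    rcases {k ∈ K | δ k = 1}.eq_empty_or_nonempty with hnone | ⟨k, hk⟩
    · simpa [hB_def, hnone] using hsum
    · obtain ⟨hkK, hk⟩ := mem_filter.1 hk
      exact (sum_add_card_le_card_sdiff hz (fun j hj => hnonpos k hk j (mem_inter.1 hj).2) hB
        (hBP.trans (sdiff_subset_sdiff subset_rfl inter_subset_left))).trans (hcard k hkK)
  · have hcount := sum_add_card_le_card_sdiff hz (hnonpos k₀ h₀) hB hBP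
    rw [h₀, mul_one]
    linarith

end Counting

namespace Xset

variable {n m l u : ℕ} {S : Fin m → Finset (Fin n)} {zd : (Fin n → ℝ) × (Fin m → ℝ)}

lemma le_one (h : zd ∈ Xset n m l u S) (j : Fin n) : zd.1 j ≤ 1 := by
  rcases h.1 j with hj | hj <;> simp [hj]

lemma sum_le (h : zd ∈ Xset n m l u S) (P : Finset (Fin n)) : ∑ j ∈ P, zd.1 j ≤ u := by
  obtain ⟨hz, -, -, -, hu⟩ := h
  have hnonneg : ∀ j, 0 ≤ zd.1 j := fun j => by rcases hz j with hj | hj <;> simp [hj]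
  exact (sum_le_univ_sum_of_nonneg hnonneg).trans hu

lemma add_le_one (h : zd ∈ Xset n m l u S) (i : Fin m) (j : Fin n) (hj : j ∈ S i) :
    zd.1 j + zd.2 i ≤ 1 := by
  obtain ⟨hz, hδ, hprod, -⟩ := h
  rcases hz j with hzj | hzj
  · rcases hδ i with hi | hi <;> simp [hzj, hi]
  · have hi : zd.2 i = 0 := (hprod i).trans (prod_eq_zero hj (by simp [hzj]))
    simp [hzj, hi]

end Xset

theorem stmt18 (n m l u t : ℕ) (S : Fin m → Finset (Fin n))
    (hn : 0 < n) (hm : 0 < m) (hlu : l ≤ u) (hu : 2 ≤ u)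
    (hdist : Function.Injective S)
    (hcard : ∀ i, 1 ≤ (S i).card ∧ (S i).card ≤ n - l)
    (ht : 0 < t) (idx : Fin t → Fin m) (hinj : Function.Injective idx)
    (S' : Finset (Fin n))
    (hcond : ∀ k : Fin t, 0 < (k : ℕ) →
      (S' \ (S (idx ⟨0, ht⟩) ∩ S (idx k))).card ≤ u) :
    ∀ zd ∈ Xset n m l u S,
      ∑ j ∈ S', zd.1 j
        + ((u : ℝ) - ((S' \ S (idx ⟨0, ht⟩)).card : ℝ)) * zd.2 (idx ⟨0, ht⟩)
        + ∑ k ∈ Finset.univ.filter (fun k : Fin t => 0 < (k : ℕ)),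
            ((((S' ∩ S (idx k)) \
                (Finset.univ.filter (fun k' : Fin t => k' < k)).biUnion
                  (fun k' => S (idx k'))).card : ℝ)) * zd.2 (idx k)
      ≤ (u : ℝ) := by
  intro zd h
  exact stmt18_general (T := S ∘ idx) (fun j _ => Xset.le_one h j) (Xset.sum_le h S')
    (fun k => h.2.1 (idx k)) (fun k => Xset.add_le_one h (idx k))
    ((pairwise_disjoint_inter_sdiff_biUnion_lt S' (S ∘ idx)).set_pairwise _)
    (fun k hk => inter_sdiff_biUnion_lt_subset S' (S ∘ idx) (mem_filter.1 hk).2)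
    (fun k hk => Nat.cast_le.2 (hcond k (mem_filter.1 hk).2))
end
end

section
/- Let t ≥ 1 and let i_1,…,i_t ∈ I be distinct indices, writing S_{[k]} = S_{i_k} and δ_{[k]} = δ_{i_k}. Let S' ⊆ J and suppose |S'∪(S_{[1]}∩S_{[i]})| ≥ n − l for every i ∈ {2,…,t}. Then the inequality −Σ_{j∈S'} z_j + (|S'∪S_{[1]}| − n + l)·δ_{[1]} + Σ_{i=2}^{t} |S_{[i]} ∖ (S_{[1]}∪⋯∪S_{[i−1]}) ∖ S'|·δ_{[i]} ≤ 0 holds for every (z,δ) ∈ X^{l,u}. -/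
open Finset

noncomputable section

/-!
A binary point `z` is the indicator of a set `A` with `l ≤ #A`; then `∑ j ∈ B, z j = #(B ∩ A)`, and
`δ_k = ∏ j ∈ T k, (1 - z j)` is `1` exactly when `T k` misses `A`. Let `k₀` be the first index, and
call `k` active if `δ_k = 1`. If `C ⊆ T k₀` misses `A`, then the elements of `C` and those
introduced by active indices after `k₀` all lie outside `A`, so adjoining them to `S'` does not
enlarge its intersection with `A`. Inclusion–exclusion then bounds `#(S' ∪ C)` plus the number of
new elements by `n - l + #(S' ∩ A)`. Take `C = T k₀` if `k₀` is active. Otherwise take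
`C = T k₀ ∩ T k` for some active `k` after `k₀`: the covering hypothesis says that
`#(S' ∪ C) ≥ n - l`. If there is no such `k`, the left-hand side is `-#(S' ∩ A)`.
-/

section Counting

variable {J K : Type*} [Fintype J] [DecidableEq J]

theorem card_union_add_card_le_of_disjoint {W A : Finset J} (B : Finset J) (hWA : Disjoint W A) :
    #(B ∪ W) + #A ≤ Fintype.card J + #(B ∩ A) := by
  have inter_eq : (B ∪ W) ∩ A = B ∩ A := by
    rw [union_inter_distrib_right, disjoint_iff_inter_eq_empty.1 hWA, union_empty]
  rw [← card_union_add_card_inter, inter_eq]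
  gcongr
  exact card_le_univ _

theorem card_union_add_sum_card_add_card_le {A B C : Finset J} {a : Finset K} {D : K → Finset J}
    (hCA : Disjoint C A) (hDA : ∀ k ∈ a, Disjoint (D k) A)
    (hBCD : ∀ k ∈ a, Disjoint (B ∪ C) (D k)) (hD : (a : Set K).PairwiseDisjoint D) :
    #(B ∪ C) + ∑ k ∈ a, #(D k) + #A ≤ Fintype.card J + #(B ∩ A) := by
  rw [← card_biUnion hD, ← card_union_of_disjoint ((disjoint_biUnion_right ..).2 hBCD),
    union_assoc]
  exact card_union_add_card_le_of_disjoint B <|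
    disjoint_union_left.2 ⟨hCA, (disjoint_biUnion_left ..).2 hDA⟩

variable [LinearOrder K] [LocallyFiniteOrderBot K]

theorem card_union_add_sum_card_disjointed_sdiff_add_card_le {A C : Finset J} {T : K → Finset J}
    {k₀ : K} {a : Finset K} (B : Finset J) (ha : ∀ k ∈ a, k₀ < k) (hTA : ∀ k ∈ a, Disjoint (T k) A)
    (hC : C ⊆ T k₀) (hCA : Disjoint C A) :
    #(B ∪ C) + ∑ k ∈ a, #(disjointed T k \ B) + #A ≤ Fintype.card J + #(B ∩ A) := by
  refine card_union_add_sum_card_add_card_le hCA (fun k hk => ?_) (fun k hk => ?_) ?_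
  · exact (hTA k hk).mono_left (sdiff_subset.trans (disjointed_le T k))
  · have first_disjoint : Disjoint (T k₀) (disjointed T k) :=
      disjoint_sdiff.mono_left (le_sup (f := T) (mem_Iio.2 (ha k hk)))
    exact disjoint_union_left.2 ⟨disjoint_sdiff, first_disjoint.mono hC sdiff_subset⟩
  · exact fun k _ k' _ hne => (disjoint_disjointed T hne).mono sdiff_subset sdiff_subset

theorem sum_card_disjointed_sdiff_le_card_inter {A : Finset J} {T : K → Finset J} {k₀ : K}
    {a : Finset K} {B : Finset J} (ha : ∀ k ∈ a, k₀ < k) (hTA : ∀ k ∈ a, Disjoint (T k) A)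
    (hcover : ∀ k ∈ a, Fintype.card J ≤ #(B ∪ (T k₀ ∩ T k)) + #A) :
    ∑ k ∈ a, #(disjointed T k \ B) ≤ #(B ∩ A) := by
  obtain rfl | ⟨k, hk⟩ := a.eq_empty_or_nonempty
  · simp
  · have count := card_union_add_sum_card_disjointed_sdiff_add_card_le B ha hTA
      inter_subset_left ((hTA k hk).mono_left (inter_subset_right (s₁ := T k₀)))
    have := hcover k hk
    omega

end Counting

section BinaryPoint

variable {J R : Type*} [DecidableEq J]

theorem exists_eq_ite_mem_of_binary [Finite J] [Zero R] [One R] {z : J → R}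
    (hz : ∀ j, z j = 0 ∨ z j = 1) : ∃ A : Finset J, z = fun j => if j ∈ A then 1 else 0 := by
  classical
  refine ⟨(Set.toFinite {j | z j = 1}).toFinset, funext fun j => ?_⟩
  have := hz j
  simp only [Set.Finite.mem_toFinset, Set.mem_ofPred_eq]
  split_ifs <;> tauto

theorem prod_one_sub_ite_mem [CommRing R] (s A : Finset J) :
    ∏ j ∈ s, (1 - if j ∈ A then (1 : R) else 0) = if Disjoint s A then 1 else 0 := by
  have factor_eq (j : J) : (1 - if j ∈ A then (1 : R) else 0) = if j ∉ A then 1 else 0 := by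
    split_ifs <;> simp_all
  simp only [factor_eq, prod_boole, disjoint_left]

end BinaryPoint

theorem stmt19_general {J K R : Type*} [Fintype J] [DecidableEq J] [LinearOrder K]
    [LocallyFiniteOrderBot K] [CommRing R] [LinearOrder R] [IsStrictOrderedRing R] {l : ℕ}
    {T : K → Finset J} {k₀ : K} {s : Finset K} {S' : Finset J} (hs : ∀ k ∈ s, k₀ < k)
    (hcover : ∀ k ∈ s, Fintype.card J ≤ #(S' ∪ (T k₀ ∩ T k)) + l) {z : J → R}
    (hz : ∀ j, z j = 0 ∨ z j = 1) (hl : (l : R) ≤ ∑ j, z j) :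
    -(∑ j ∈ S', z j)
      + (#(S' ∪ T k₀) - Fintype.card J + l) * ∏ j ∈ T k₀, (1 - z j)
      + ∑ k ∈ s, #(disjointed T k \ S') * ∏ j ∈ T k, (1 - z j) ≤ 0 := by
  obtain ⟨A, rfl⟩ := exists_eq_ite_mem_of_binary hz
  have hlA : l ≤ #A := by simpa using hl
  have active_gt : ∀ k ∈ s.filter (fun k => Disjoint (T k) A), k₀ < k := fun k hk =>
    hs k (mem_filter.1 hk).1
  have active_disjoint : ∀ k ∈ s.filter (fun k => Disjoint (T k) A), Disjoint (T k) A :=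
    fun k hk => (mem_filter.1 hk).2
  simp only [prod_one_sub_ite_mem, mul_ite, mul_one, mul_zero, ← sum_filter,
    filter_mem_eq_inter, sum_const, nsmul_one]
  split_ifs with first_active
  · have count := card_union_add_sum_card_disjointed_sdiff_add_card_le S' active_gt
      active_disjoint subset_rfl first_active
    have : (#(S' ∪ T k₀) + ∑ k ∈ s with Disjoint (T k) A, (#(disjointed T k \ S') : R) + l) ≤
        Fintype.card J + #(S' ∩ A) := mod_cast (Nat.add_le_add_left hlA _).trans count
    linarith
  · have count := sum_card_disjointed_sdiff_le_card_inter active_gt active_disjoint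
      fun k hk => (hcover k (mem_filter.1 hk).1).trans (Nat.add_le_add_left hlA _)
    have : ∑ k ∈ s with Disjoint (T k) A, (#(disjointed T k \ S') : R) ≤ #(S' ∩ A) :=
      mod_cast count
    linarith

theorem stmt19 (n m l u t : ℕ) (S : Fin m → Finset (Fin n))
    (hn : 0 < n) (hm : 0 < m) (hlu : l ≤ u) (hu : 2 ≤ u)
    (hdist : Function.Injective S)
    (hcard : ∀ i, 1 ≤ (S i).card ∧ (S i).card ≤ n - l)
    (ht : 0 < t) (idx : Fin t → Fin m) (hinj : Function.Injective idx)
    (S' : Finset (Fin n))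
    (hcond : ∀ k : Fin t, 0 < (k : ℕ) →
      n - l ≤ (S' ∪ (S (idx ⟨0, ht⟩) ∩ S (idx k))).card) :
    ∀ zd ∈ Xset n m l u S,
      -(∑ j ∈ S', zd.1 j)
        + (((S' ∪ S (idx ⟨0, ht⟩)).card : ℝ) - (n : ℝ) + (l : ℝ)) * zd.2 (idx ⟨0, ht⟩)
        + ∑ k ∈ Finset.univ.filter (fun k : Fin t => 0 < (k : ℕ)),
            ((((S (idx k) \
                (Finset.univ.filter (fun k' : Fin t => k' < k)).biUnion
                  (fun k' => S (idx k'))) \ S').card : ℝ)) * zd.2 (idx k)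
      ≤ 0 := by
  rintro zd ⟨hz, -, hδ, hl, -⟩
  simpa [disjointed_apply, sup_eq_biUnion, hδ, filter_gt_eq_Iio] using
    stmt19_general (T := fun k => S (idx k)) (s := {k : Fin t | 0 < (k : ℕ)})
      (fun _ hk => (mem_filter.1 hk).2)
      (fun k hk => by simpa using hcond k (mem_filter.1 hk).2) hz hl
end
end
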